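/- Let 1 < p < ∞ and let q satisfy 1/p + 1/q = 1. Let f : L^p[0,1] × L^p[0,1] → ℝ be a bilinear 2-functional and K ≥ 0 a constant such that |f(x,y)| ≤ K ‖x,y‖_p^G for all x, y ∈ L^p[0,1]. Then f is antisymmetric (f(x,y) = −f(y,x) for all x, y) and |f(x,y)| ≤ 2K ‖x‖_p ‖y‖_p for all x, y ∈ L^p[0,1]. -/

import Mathlib

/-!
All determinants defining `‖x,x‖_p^G` vanish, so the hypothesis forces `f x x = 0`; expanding
`f (x + y) (x + y) = 0` by bilinearity gives antisymmetry (this needs `L^p` closed under addition,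
`memLp01_add`). Hölder's inequality (`abs_integral_mul_le`) bounds each of the two products in the
determinant by `‖x‖_p ‖y‖_p`, so `‖x,y‖_p^G ≤ 2 ‖x‖_p ‖y‖_p`, which gives the norm bound.
-/

open MeasureTheory

/-- The `L^p` norm on `[0,1]`: `‖x‖_p = (∫₀¹ |x(t)|^p dt)^(1/p)`. -/
noncomputable def pnorm (p : ℝ) (x : ℝ → ℝ) : ℝ :=
  (∫ t in (0:ℝ)..1, |x t| ^ p) ^ (1 / p)

/-- `x ∈ L^p[0,1]`: `x` is measurable and `∫₀¹ |x(t)|^p dt < ∞`. -/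
def MemLp01 (p : ℝ) (x : ℝ → ℝ) : Prop :=
  Measurable x ∧ IntervalIntegrable (fun t => |x t| ^ p) volume 0 1

/-- The set of values `|det (∫₀¹ xᵢ(u) yⱼ(u) du)ⱼᵢ|` over `y₁, y₂ ∈ L^q[0,1]` with
`‖y₁‖_q ≤ 1`, `‖y₂‖_q ≤ 1`; its supremum is the Gähler 2-norm `‖x₁,x₂‖_p^G`. -/
noncomputable def GahlerSet (q : ℝ) (x₁ x₂ : ℝ → ℝ) : Set ℝ :=
  { r | ∃ y₁ y₂ : ℝ → ℝ, MemLp01 q y₁ ∧ MemLp01 q y₂ ∧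
      pnorm q y₁ ≤ 1 ∧ pnorm q y₂ ≤ 1 ∧
      r = |(∫ u in (0:ℝ)..1, x₁ u * y₁ u) * (∫ u in (0:ℝ)..1, x₂ u * y₂ u) -
           (∫ u in (0:ℝ)..1, x₂ u * y₁ u) * (∫ u in (0:ℝ)..1, x₁ u * y₂ u)| }

/-- The Gähler 2-norm `‖x₁,x₂‖_p^G` on `L^p[0,1]` (where `1/p + 1/q = 1`). -/
noncomputable def gahler (q : ℝ) (x₁ x₂ : ℝ → ℝ) : ℝ := sSup (GahlerSet q x₁ x₂)

/-- `f` is a bilinear 2-functional on `L^p[0,1] × L^p[0,1]` (linear in each argument,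
with respect to pointwise operations on functions). -/
def Bilinear01 (p : ℝ) (f : (ℝ → ℝ) → (ℝ → ℝ) → ℝ) : Prop :=
  (∀ x x' y, MemLp01 p x → MemLp01 p x' → MemLp01 p y →
      f (x + x') y = f x y + f x' y) ∧
  (∀ (a : ℝ) (x y : ℝ → ℝ), MemLp01 p x → MemLp01 p y → f (a • x) y = a * f x y) ∧
  (∀ x y y', MemLp01 p x → MemLp01 p y → MemLp01 p y' →
      f x (y + y') = f x y + f x y') ∧
  (∀ (a : ℝ) (x y : ℝ → ℝ), MemLp01 p x → MemLp01 p y → f x (a • y) = a * f x y)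

theorem memLp01_iff {p : ℝ} (hp : 0 < p) (x : ℝ → ℝ) :
    MemLp01 p x ↔
      Measurable x ∧ MemLp x (ENNReal.ofReal p) (volume.restrict (Set.Ioc (0:ℝ) 1)) := by
  refine and_congr_right fun hx => ?_
  rw [intervalIntegrable_iff_integrableOn_Ioc_of_le zero_le_one, IntegrableOn,
    ← integrable_norm_rpow_iff hx.aestronglyMeasurable (by simpa using hp) (by simp),
    ENNReal.toReal_ofReal hp.le]
  simp only [Real.norm_eq_abs]

theorem memLp01_add {p : ℝ} (hp : 0 < p) {x y : ℝ → ℝ} (hx : MemLp01 p x) (hy : MemLp01 p y) :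
    MemLp01 p (x + y) := by
  rw [memLp01_iff hp] at *
  exact ⟨hx.1.add hy.1, hx.2.add hy.2⟩

theorem pnorm_nonneg (p : ℝ) (x : ℝ → ℝ) : 0 ≤ pnorm p x :=
  Real.rpow_nonneg
    (intervalIntegral.integral_nonneg zero_le_one fun _ _ => Real.rpow_nonneg (abs_nonneg _) _) _

/-- Hölder's inequality on `[0,1]`, tested against the unit ball of `L^q`. -/
theorem abs_integral_mul_le {p q : ℝ} (h : p.HolderConjugate q) {x y : ℝ → ℝ}
    (hx : MemLp01 p x) (hy : MemLp01 q y) (hy1 : pnorm q y ≤ 1) :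
    |∫ u in (0:ℝ)..1, x u * y u| ≤ pnorm p x := by
  have key := integral_mul_norm_le_Lp_mul_Lq h ((memLp01_iff h.pos x).1 hx).2
    ((memLp01_iff h.symm.pos y).1 hy).2
  simp only [Real.norm_eq_abs, ← intervalIntegral.integral_of_le zero_le_one] at key
  calc |∫ u in (0:ℝ)..1, x u * y u|
      ≤ ∫ u in (0:ℝ)..1, |x u * y u| :=
        intervalIntegral.abs_integral_le_integral_abs zero_le_one
    _ = ∫ u in (0:ℝ)..1, |x u| * |y u| := by simp only [abs_mul]
    _ ≤ pnorm p x * pnorm q y := key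
    _ ≤ pnorm p x := mul_le_of_le_one_right (pnorm_nonneg p x) hy1

theorem gahler_le {p q : ℝ} (h : p.HolderConjugate q) {x y : ℝ → ℝ}
    (hx : MemLp01 p x) (hy : MemLp01 p y) :
    gahler q x y ≤ 2 * (pnorm p x * pnorm p y) := by
  have hx0 := pnorm_nonneg p x
  have hy0 := pnorm_nonneg p y
  refine Real.sSup_le ?_ (by positivity)
  rintro r ⟨y₁, y₂, h₁, h₂, n₁, n₂, rfl⟩
  refine (abs_sub _ _).trans ?_
  rw [abs_mul, abs_mul]
  have e₁ := mul_le_mul (abs_integral_mul_le h hx h₁ n₁) (abs_integral_mul_le h hy h₂ n₂)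
    (abs_nonneg _) hx0
  have e₂ := mul_le_mul (abs_integral_mul_le h hy h₁ n₁) (abs_integral_mul_le h hx h₂ n₂)
    (abs_nonneg _) hy0
  linarith

theorem gahler_self_le (q : ℝ) (x : ℝ → ℝ) : gahler q x x ≤ 0 := by
  refine Real.sSup_le ?_ le_rfl
  rintro r ⟨y₁, y₂, -, -, -, -, rfl⟩
  simp

/-- for `1 < p < ∞`, `1/p + 1/q = 1`, if the bilinear 2-functional `f`
satisfies `|f(x,y)| ≤ K ‖x,y‖_p^G`, then `f` is antisymmetric and
`|f(x,y)| ≤ 2K ‖x‖_p ‖y‖_p` for all `x, y ∈ L^p[0,1]`. -/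
theorem stmt11 (p q : ℝ) (hp : 1 < p) (hpq : 1 / p + 1 / q = 1)
    (f : (ℝ → ℝ) → (ℝ → ℝ) → ℝ) (hf : Bilinear01 p f)
    (K : ℝ) (hK : 0 ≤ K)
    (hbound : ∀ x y, MemLp01 p x → MemLp01 p y → |f x y| ≤ K * gahler q x y) :
    (∀ x y, MemLp01 p x → MemLp01 p y → f x y = - f y x) ∧
    (∀ x y, MemLp01 p x → MemLp01 p y → |f x y| ≤ 2 * K * pnorm p x * pnorm p y) := by
  have h : p.HolderConjugate q := Real.holderConjugate_iff.2 ⟨hp, by simpa using hpq⟩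
  obtain ⟨hadd, -, hadd', -⟩ := hf
  refine ⟨fun x y hx hy => ?_, fun x y hx hy => ?_⟩
  · have hself : ∀ z, MemLp01 p z → f z z = 0 := fun z hz =>
      abs_nonpos_iff.1 ((hbound z z hz hz).trans
        (mul_nonpos_of_nonneg_of_nonpos hK (gahler_self_le q z)))
    have hxy := memLp01_add h.pos hx hy
    have e := hself _ hxy
    rw [hadd x y _ hx hy hxy, hadd' x x y hx hx hy, hadd' y x y hy hx hy, hself x hx,
      hself y hy] at e
    linarith
  · refine (hbound x y hx hy).trans ?_
    have := mul_le_mul_of_nonneg_left (gahler_le h hx hy) hK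
    linarith
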